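/- arXiv:1012.5261 — 2 statements merged into one kernel-verified Lean document; each statement's English description precedes it below -/
import Mathlib

section
/- In R one has [W₁, G₂] + [G₁, W₂] = 0, i.e. [A*, G₂] + [G₁, W₂] = 0. (Image of the O_q(ŝl₂) relation (qo8) with k = 0, l = 1.) -/
/-- Commutator [X,Y] = XY - YX. -/
def lieComm {R : Type*} [Ring R] (X Y : R) : R := X * Y - Y * X

/-- q-commutator [X,Y]_q = q XY - q⁻¹ YX. -/
noncomputable def qcomm {R : Type*} [Ring R] [Algebra ℂ R] (q : ℂ) (X Y : R) : R :=
  q • (X * Y) - q⁻¹ • (Y * X)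

/-!
Write `B = A*`. The alternating elements satisfy the closed formulas
`W₂ = A + ρ⁻¹[G₁, B]_q = A + ρ⁻¹[B, G̃₁]_q` and
`(q² + q⁻²)(G₂ - a₂) = q[W₂, A]_{q²} + q⁻¹[B, W₋₁]_{q²} - (q - q⁻¹)Q`, where
`Q = ρ⁻¹(G₁G̃₁ - a₁²) + q²A² + q⁻²B²`.
The first one turns the q-Dolan–Grady relation for `B` into `[B, W₂] = 0`. Granting this, applying
`[B, ·]` to the second one, and replacing `[B, W₋₁]` by `[W₂, A]`, the two `q²`-commutators
contribute `(q - q⁻¹)q(G₁W₂ - W₂G̃₁) - (q² + q⁻²)[G₁, W₂]`, while `[B, Q] = q(G₁W₂ - W₂G̃₁)`.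
-/

section AlternatingElements

attribute [local instance] LieRing.ofAssociativeRing

variable {R : Type*} [Ring R]

theorem lieComm_eq_lie (X Y : R) : lieComm X Y = ⁅X, Y⁆ := rfl

variable [Algebra ℂ R]

/-- The first alternating element `[X, Y]_q + a`, giving `G₁` at `(A*, A)` and `G̃₁` at
`(A, A*)`. -/
noncomputable def alternatingG₁ (q a : ℂ) (X Y : R) : R := qcomm q X Y + a • (1 : R)

/-- The alternating element giving `W₂` at `(A*, A)` and `W₋₁` at `(A, A*)`. -/
noncomputable def alternatingW₂ (q ρ a : ℂ) (X Y : R) : R :=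
  ρ⁻¹ • ((q ^ 2 + q⁻¹ ^ 2) • (X * Y * X) - X ^ 2 * Y - Y * X ^ 2)
    + Y + (ρ⁻¹ * a * (q - q⁻¹)) • X

/-- The second alternating element, giving `G₂` at `(A*, A)` and `G̃₂` at `(A, A*)`. -/
noncomputable def alternatingG₂ (q ρ a₁ a₂ : ℂ) (X Y : R) : R :=
  (ρ * (q ^ 2 + q⁻¹ ^ 2))⁻¹ •
    ((q⁻¹ ^ 3 + q⁻¹) • (Y ^ 2 * X ^ 2) - (q ^ 3 + q) • (X ^ 2 * Y ^ 2)
      + (q⁻¹ ^ 3 - q ^ 3) • (Y * X ^ 2 * Y + X * Y ^ 2 * X)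
      - (q⁻¹ ^ 5 + q⁻¹ ^ 3 + 2 * q⁻¹) • (Y * X * Y * X)
      + (q ^ 5 + q ^ 3 + 2 * q) • (X * Y * X * Y)
      + (ρ * (q - q⁻¹)) • (Y ^ 2 + X ^ 2)
      + (a₁ * (q ^ 2 + q⁻¹ ^ 2) * (q - q⁻¹)) • qcomm q X Y) + a₂ • (1 : R)

theorem sq_add_inv_sq_ne_zero {q : ℂ} (hq : q ≠ 0) (hq8 : q ^ 8 ≠ 1) : q ^ 2 + q⁻¹ ^ 2 ≠ 0 := by
  intro h
  have hq4 : q ^ 4 = -1 := by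
    field_simp at h
    linear_combination h
  exact hq8 (by linear_combination (q ^ 4 - 1) * hq4)

theorem ne_zero_of_sq_add_inv_sq_ne_zero {q : ℂ} (hs : q ^ 2 + q⁻¹ ^ 2 ≠ 0) : q ≠ 0 := by
  rintro rfl
  simp at hs

theorem qcomm_inv (q : ℂ) (X Y : R) : qcomm q⁻¹ X Y = -qcomm q Y X := by
  simp only [qcomm, inv_inv, neg_sub]

theorem qcomm_add_smul_one_left (q a : ℂ) (X Y : R) :
    qcomm q (X + a • (1 : R)) Y = qcomm q X Y + (a * (q - q⁻¹)) • Y := by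
  simp only [qcomm, add_mul, mul_add, smul_mul_assoc, mul_smul_comm, one_mul, mul_one]
  module

theorem lieComm_qcomm_of_commute {X Y : R} (h : Commute X Y) (p : ℂ) (Z : R) :
    lieComm X (qcomm p Y Z) = qcomm p Y (lieComm X Z) := by
  have hXY : X * (Y * Z) = Y * (X * Z) := h.left_comm Z
  simp only [lieComm, qcomm, mul_sub, sub_mul, smul_mul_assoc, mul_smul_comm, mul_assoc, hXY, h.eq]
  module

theorem lieComm_mul_eq_qcomm {q : ℂ} (hq : q ≠ 0) (X G G' : R) :
    lieComm X (G * G') = q • (G * qcomm q X G' - qcomm q G X * G') := by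
  simp only [lieComm, qcomm, mul_sub, sub_mul, smul_mul_assoc, mul_smul_comm, mul_assoc]
  match_scalars
  all_goals field_simp
  ring

theorem lieComm_qcomm_jacobi (q : ℂ) (X Y Z : R) :
    lieComm X (qcomm q Y Z) + lieComm Y (qcomm q Z X) + lieComm Z (qcomm q X Y) = 0 := by
  simp only [lieComm, qcomm, mul_sub, sub_mul, smul_mul_assoc, mul_smul_comm, mul_assoc]
  module

theorem alternatingW₂_eq_add_qcomm_left {q : ℂ} (hq : q ≠ 0) (ρ a : ℂ) (X Y : R) :
    alternatingW₂ q ρ a X Y = Y + ρ⁻¹ • qcomm q (alternatingG₁ q a X Y) X := by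
  rw [alternatingG₁, qcomm_add_smul_one_left]
  simp only [alternatingW₂, qcomm, mul_sub, sub_mul, smul_mul_assoc, mul_smul_comm, mul_assoc,
    pow_two X]
  match_scalars
  all_goals field_simp
  ring

theorem alternatingW₂_eq_add_qcomm_right {q : ℂ} (hq : q ≠ 0) (ρ a : ℂ) (X Y : R) :
    alternatingW₂ q ρ a X Y = Y + ρ⁻¹ • qcomm q X (alternatingG₁ q a Y X) := by
  simp only [alternatingG₁, alternatingW₂, qcomm, mul_add, add_mul, mul_sub, sub_mul,
    smul_mul_assoc, mul_smul_comm, mul_assoc, pow_two X, mul_one, one_mul]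
  match_scalars
  all_goals field_simp
  ring

theorem commute_alternatingW₂ {q ρ : ℂ} (hq : q ≠ 0) (hρ : ρ ≠ 0) (a : ℂ) {X Y : R}
    (hDG : lieComm X (qcomm q⁻¹ X (qcomm q X Y)) = ρ • lieComm X Y) :
    Commute X (alternatingW₂ q ρ a X Y) := by
  simp only [qcomm_inv, lieComm_eq_lie, lie_neg] at hDG
  rw [commute_iff_lie_eq, alternatingW₂_eq_add_qcomm_left hq, alternatingG₁,
    qcomm_add_smul_one_left]
  simp only [lie_add, lie_smul, lie_self, smul_zero, add_zero]
  rw [neg_eq_iff_eq_neg.1 hDG, smul_neg, inv_smul_smul₀ hρ, add_neg_cancel]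

theorem lieComm_alternatingW₂_swap {q : ℂ} (hq : q ≠ 0) (ρ a : ℂ) (X Y : R) :
    lieComm X (alternatingW₂ q ρ a Y X) = lieComm (alternatingW₂ q ρ a X Y) Y := by
  have hG : lieComm (alternatingG₁ q a X Y) (qcomm q X Y) = 0 :=
    ((Commute.refl _).add_left ((Commute.one_left _).smul_left a)).lie_eq
  have hJacobi : lieComm X (qcomm q Y (alternatingG₁ q a X Y))
      = lieComm (qcomm q (alternatingG₁ q a X Y) X) Y := by
    have h := lieComm_qcomm_jacobi q X Y (alternatingG₁ q a X Y)
    rw [hG, add_zero] at h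
    rw [eq_neg_of_add_eq_zero_left h, lieComm_eq_lie, lie_skew, lieComm_eq_lie]
  rw [alternatingW₂_eq_add_qcomm_right hq ρ a Y X, alternatingW₂_eq_add_qcomm_left hq ρ a X Y]
  simp only [lieComm_eq_lie] at hJacobi ⊢
  simp only [lie_add, add_lie, lie_self, lie_smul, smul_lie, hJacobi]

theorem smul_lieComm_sq (q a : ℂ) (X Y : R) :
    q • lieComm X (Y ^ 2) = alternatingG₁ q a X Y * Y - Y * alternatingG₁ q a Y X := by
  simp only [lieComm, alternatingG₁, qcomm, mul_add, add_mul, mul_sub, sub_mul,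
    smul_mul_assoc, mul_smul_comm, mul_assoc, pow_two, mul_one, one_mul]
  module

theorem lieComm_alternating_quadratic {q : ℂ} (hq : q ≠ 0) (ρ a : ℂ) (X Y : R) :
    ρ⁻¹ • lieComm X (alternatingG₁ q a X Y * alternatingG₁ q a Y X) + q ^ 2 • lieComm X (Y ^ 2)
      = q • (alternatingG₁ q a X Y * alternatingW₂ q ρ a X Y
        - alternatingW₂ q ρ a X Y * alternatingG₁ q a Y X) := by
  have hleft := alternatingW₂_eq_add_qcomm_left hq ρ a X Y
  have hright := alternatingW₂_eq_add_qcomm_right hq ρ a X Y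
  rw [lieComm_mul_eq_qcomm hq, pow_two q, mul_smul, smul_lieComm_sq q a]
  nth_rw 1 [hright]
  rw [hleft, mul_add, add_mul, mul_smul_comm, smul_mul_assoc]
  module

theorem qcomm_lieComm_add_qcomm_lieComm_of_commute {q : ℂ} (hq : q ≠ 0) (a : ℂ) {X W : R}
    (h : Commute X W) (Y : R) :
    q • qcomm (q ^ 2) W (lieComm X Y) + q⁻¹ • qcomm (q ^ 2) X (lieComm W Y)
      = ((q - q⁻¹) * q) • (alternatingG₁ q a X Y * W - W * alternatingG₁ q a Y X)
        - (q ^ 2 + q⁻¹ ^ 2) • lieComm (alternatingG₁ q a X Y) W := by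
  have hXW : X * (W * Y) = W * (X * Y) := h.left_comm Y
  simp only [lieComm, alternatingG₁, qcomm, mul_add, add_mul, mul_sub, sub_mul,
    smul_mul_assoc, mul_smul_comm, mul_assoc, mul_one, one_mul, hXW, ← h.eq]
  match_scalars <;> field_simp <;> ring

theorem smul_alternatingG₂_sub {q ρ : ℂ} (hs : q ^ 2 + q⁻¹ ^ 2 ≠ 0) (hρ : ρ ≠ 0)
    (a₁ a₂ : ℂ) (X Y : R) :
    (q ^ 2 + q⁻¹ ^ 2) • (alternatingG₂ q ρ a₁ a₂ X Y - a₂ • (1 : R))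
      = q • qcomm (q ^ 2) (alternatingW₂ q ρ a₁ X Y) Y
        + q⁻¹ • qcomm (q ^ 2) X (alternatingW₂ q ρ a₁ Y X)
        - (q - q⁻¹) • (ρ⁻¹ • (alternatingG₁ q a₁ X Y * alternatingG₁ q a₁ Y X - a₁ ^ 2 • (1 : R))
          + q ^ 2 • Y ^ 2 + q⁻¹ ^ 2 • X ^ 2) := by
  have hq : q ≠ 0 := ne_zero_of_sq_add_inv_sq_ne_zero hs
  rw [alternatingG₂, add_sub_cancel_right, mul_comm ρ, mul_inv, mul_smul, smul_inv_smul₀ hs]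
  simp only [alternatingG₁, alternatingW₂, qcomm, mul_add, add_mul, mul_sub, sub_mul,
    smul_mul_assoc, mul_smul_comm, mul_assoc, pow_two X, pow_two Y, mul_one, one_mul]
  match_scalars <;> field_simp <;> ring

theorem smul_lieComm_alternatingG₂ {q ρ : ℂ} (hs : q ^ 2 + q⁻¹ ^ 2 ≠ 0) (hρ : ρ ≠ 0)
    (a₁ a₂ : ℂ) {X Y : R} (h : Commute X (alternatingW₂ q ρ a₁ X Y)) :
    (q ^ 2 + q⁻¹ ^ 2) • lieComm X (alternatingG₂ q ρ a₁ a₂ X Y)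
      = -((q ^ 2 + q⁻¹ ^ 2) • lieComm (alternatingG₁ q a₁ X Y) (alternatingW₂ q ρ a₁ X Y)) := by
  have hq : q ≠ 0 := ne_zero_of_sq_add_inv_sq_ne_zero hs
  calc (q ^ 2 + q⁻¹ ^ 2) • lieComm X (alternatingG₂ q ρ a₁ a₂ X Y)
    _ = lieComm X ((q ^ 2 + q⁻¹ ^ 2) • (alternatingG₂ q ρ a₁ a₂ X Y - a₂ • (1 : R))) := by
      rw [lieComm_eq_lie X (_ • _), lie_smul, lie_sub, lie_smul,
        (Commute.one_right X).lie_eq, smul_zero, sub_zero, lieComm_eq_lie]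
    _ = q • lieComm X (qcomm (q ^ 2) (alternatingW₂ q ρ a₁ X Y) Y)
        + q⁻¹ • lieComm X (qcomm (q ^ 2) X (alternatingW₂ q ρ a₁ Y X))
        - (q - q⁻¹) • (ρ⁻¹ • lieComm X (alternatingG₁ q a₁ X Y * alternatingG₁ q a₁ Y X)
          + q ^ 2 • lieComm X (Y ^ 2)) := by
      rw [smul_alternatingG₂_sub hs hρ]
      simp only [lieComm_eq_lie, lie_add, lie_sub, lie_smul, (Commute.one_right X).lie_eq,
        ((Commute.refl X).pow_right 2).lie_eq, smul_zero, sub_zero, add_zero]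
    _ = q • qcomm (q ^ 2) (alternatingW₂ q ρ a₁ X Y) (lieComm X Y)
        + q⁻¹ • qcomm (q ^ 2) X (lieComm (alternatingW₂ q ρ a₁ X Y) Y)
        - ((q - q⁻¹) * q) • (alternatingG₁ q a₁ X Y * alternatingW₂ q ρ a₁ X Y
          - alternatingW₂ q ρ a₁ X Y * alternatingG₁ q a₁ Y X) := by
      rw [lieComm_qcomm_of_commute h, lieComm_qcomm_of_commute (Commute.refl X),
        lieComm_alternatingW₂_swap hq, lieComm_alternating_quadratic hq, mul_smul]
    _ = -((q ^ 2 + q⁻¹ ^ 2) •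
        lieComm (alternatingG₁ q a₁ X Y) (alternatingW₂ q ρ a₁ X Y)) := by
      rw [qcomm_lieComm_add_qcomm_lieComm_of_commute hq a₁ h, sub_sub_cancel_left]

theorem stmt_12_general {q ρ : ℂ} (hs : q ^ 2 + q⁻¹ ^ 2 ≠ 0) (hρ : ρ ≠ 0) (a₁ a₂ : ℂ) {A As : R}
    (hDG : lieComm As (qcomm q⁻¹ As (qcomm q As A)) = ρ • lieComm As A) :
    lieComm As (alternatingG₂ q ρ a₁ a₂ As A)
      + lieComm (alternatingG₁ q a₁ As A) (alternatingW₂ q ρ a₁ As A) = 0 := by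
  have hq : q ≠ 0 := ne_zero_of_sq_add_inv_sq_ne_zero hs
  rw [← smul_right_inj hs, smul_add, smul_zero,
    smul_lieComm_alternatingG₂ hs hρ a₁ a₂ (commute_alternatingW₂ hq hρ a₁ hDG), neg_add_cancel]

end AlternatingElements

theorem stmt_12
    {R : Type*} [Ring R] [Algebra ℂ R]
    (q ρ a₁ : ℂ) (hq : q ≠ 0) (hq8 : q ^ 8 ≠ 1) (hρ : ρ ≠ 0)
    (A As : R)
    (hDG1 : lieComm A (qcomm q⁻¹ A (qcomm q A As)) = ρ • lieComm A As)
    (hDG2 : lieComm As (qcomm q⁻¹ As (qcomm q As A)) = ρ • lieComm As A)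
    (G1 Gt1 Wm1 W2 : R)
    (hG1 : G1 = qcomm q As A + a₁ • (1 : R))
    (hGt1 : Gt1 = qcomm q A As + a₁ • (1 : R))
    (hWm1 : Wm1 = ρ⁻¹ • ((q ^ 2 + q⁻¹ ^ 2) • (A * As * A) - A ^ 2 * As - As * A ^ 2)
        + As + (ρ⁻¹ * a₁ * (q - q⁻¹)) • A)
    (hW2 : W2 = ρ⁻¹ • ((q ^ 2 + q⁻¹ ^ 2) • (As * A * As) - As ^ 2 * A - A * As ^ 2)
        + A + (ρ⁻¹ * a₁ * (q - q⁻¹)) • As)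
    (a₂ : ℂ) (G2 Gt2 : R)
    (hG2 : G2 = (ρ * (q ^ 2 + q⁻¹ ^ 2))⁻¹ •
        ((q⁻¹ ^ 3 + q⁻¹) • (A ^ 2 * As ^ 2) - (q ^ 3 + q) • (As ^ 2 * A ^ 2)
          + (q⁻¹ ^ 3 - q ^ 3) • (A * As ^ 2 * A + As * A ^ 2 * As)
          - (q⁻¹ ^ 5 + q⁻¹ ^ 3 + 2 * q⁻¹) • (A * As * A * As)
          + (q ^ 5 + q ^ 3 + 2 * q) • (As * A * As * A)
          + (ρ * (q - q⁻¹)) • (A ^ 2 + As ^ 2)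
          + (a₁ * (q ^ 2 + q⁻¹ ^ 2) * (q - q⁻¹)) • qcomm q As A) + a₂ • (1 : R))
    (hGt2 : Gt2 = (ρ * (q ^ 2 + q⁻¹ ^ 2))⁻¹ •
        ((q⁻¹ ^ 3 + q⁻¹) • (As ^ 2 * A ^ 2) - (q ^ 3 + q) • (A ^ 2 * As ^ 2)
          + (q⁻¹ ^ 3 - q ^ 3) • (As * A ^ 2 * As + A * As ^ 2 * A)
          - (q⁻¹ ^ 5 + q⁻¹ ^ 3 + 2 * q⁻¹) • (As * A * As * A)
          + (q ^ 5 + q ^ 3 + 2 * q) • (A * As * A * As)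
          + (ρ * (q - q⁻¹)) • (As ^ 2 + A ^ 2)
          + (a₁ * (q ^ 2 + q⁻¹ ^ 2) * (q - q⁻¹)) • qcomm q A As) + a₂ • (1 : R))
    : lieComm As G2 + lieComm G1 W2 = 0 := by
  subst hG1 hW2 hG2
  exact stmt_12_general (sq_add_inv_sq_ne_zero hq hq8) hρ a₁ a₂ hDG2
end

section
/- In R one has [W₁, G̃₂] + [G̃₁, W₂] = 0, i.e. [A*, G̃₂] + [G̃₁, W₂] = 0. (Image of the O_q(ŝl₂) relation (qo9) with k = 0, l = 1.) -/
/-!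
Write `X = A*`, `Y = A` and `W = W₂`. The `q`-Dolan–Grady relation for `X` says exactly that `X`
commutes with `W`. Up to an additive constant, `G̃₂` is a combination of `Y * W`, `W * Y` and an
element `C` whose commutator with `X` is a combination of `X * Y * W`, `Y * X * W`, `W * X * Y` and
`W * Y * X`. Since `X` and `W` commute, `[X, G̃₂]` is such a combination too, and its coefficients
turn out to be those of `-[[Y, X]_q, W]`.
-/

attribute [local instance] LieRing.ofAssociativeRing

namespace QOnsager

section Quartic

variable {k R : Type*} [CommRing k] [Ring R] [Algebra k R]

/-- The quartic leading part of the element `correction` below; `s` stands for `q² + q⁻²`. -/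
def quartic (s : k) (X Y : R) : R :=
  X * Y * X * Y + Y * X * Y * X + Y * X ^ 2 * Y - (s + 1) • (X * Y ^ 2 * X)

theorem lie_quartic {s : k} {X Y T : R} (hT : T = X ^ 2 * Y + Y * X ^ 2 - s • (X * Y * X)) :
    ⁅X, quartic s X Y⁆ =
      (s + 1) • (X * Y * T - T * Y * X) + (T * X * Y - Y * X * T) := by
  simp only [hT, quartic, Ring.lie_def, pow_two, mul_add, add_mul, mul_sub, sub_mul,
    smul_mul_assoc, mul_smul_comm, mul_assoc]
  match_scalars <;> ring

end Quartic

variable {k R : Type*} [Field k] [Ring R] [Algebra k R]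

/-- The `q`-commutator `[X, Y]_q`, over an arbitrary field. -/
def qCommutator (q : k) (X Y : R) : R :=
  q • (X * Y) - q⁻¹ • (Y * X)

/-- The alternating generator `W₂` for `(X, Y) = (A*, A)`; interchanging `X` and `Y` gives `W₋₁`. -/
def alternatingW (q ρ a₁ : k) (X Y : R) : R :=
  ρ⁻¹ • ((q ^ 2 + q⁻¹ ^ 2) • (X * Y * X) - X ^ 2 * Y - Y * X ^ 2) + Y + (ρ⁻¹ * a₁ * (q - q⁻¹)) • X

/-- The alternating generator `G̃₂` for `(X, Y) = (A*, A)`; interchanging `X` and `Y` gives `G₂`. -/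
def alternatingG (q ρ a₁ a₂ : k) (X Y : R) : R :=
  (ρ * (q ^ 2 + q⁻¹ ^ 2))⁻¹ •
    ((q⁻¹ ^ 3 + q⁻¹) • (X ^ 2 * Y ^ 2) - (q ^ 3 + q) • (Y ^ 2 * X ^ 2)
      + (q⁻¹ ^ 3 - q ^ 3) • (X * Y ^ 2 * X + Y * X ^ 2 * Y)
      - (q⁻¹ ^ 5 + q⁻¹ ^ 3 + 2 * q⁻¹) • (X * Y * X * Y)
      + (q ^ 5 + q ^ 3 + 2 * q) • (Y * X * Y * X)
      + (ρ * (q - q⁻¹)) • (X ^ 2 + Y ^ 2)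
      + (a₁ * (q ^ 2 + q⁻¹ ^ 2) * (q - q⁻¹)) • qCommutator q Y X) + a₂ • (1 : R)

/-- The element `C` for which `(q - q⁻¹) • C` is what remains of `(q² + q⁻²) • G̃₂` once its
`Y * W₂` and `W₂ * Y` parts and its constant are removed. Its terms in `Y ^ 2` and `X * Y + Y * X`
are what makes `⁅X, C⁆` expressible through the products of `X`, `Y` and `W₂`. -/
def correction (q ρ a₁ : k) (X Y : R) : R :=
  ρ⁻¹ • quartic (q ^ 2 + q⁻¹ ^ 2) X Y - (q ^ 2 + q⁻¹ ^ 2 + 1) • Y ^ 2 + X ^ 2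
    - (ρ⁻¹ * a₁ * (q - q⁻¹)) • (X * Y + Y * X)

theorem ne_zero_of_sq_add_inv_sq_ne_zero {q : k} (hs : q ^ 2 + q⁻¹ ^ 2 ≠ 0) : q ≠ 0 := by
  rintro rfl
  simp at hs

theorem sq_add_inv_sq_ne_zero {q : k} (hq : q ≠ 0) (hq8 : q ^ 8 ≠ 1) : q ^ 2 + q⁻¹ ^ 2 ≠ 0 := by
  contrapose! hq8
  have hq4 : q ^ 4 = -1 := by
    field_simp at hq8
    linear_combination hq8
  rw [pow_mul q 4 2, hq4, neg_one_sq]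

theorem qCommutator_inv_qCommutator {q : k} (hq : q ≠ 0) (X Y : R) :
    qCommutator q⁻¹ X (qCommutator q X Y) =
      X ^ 2 * Y + Y * X ^ 2 - (q ^ 2 + q⁻¹ ^ 2) • (X * Y * X) := by
  simp only [qCommutator, pow_two X, mul_sub, sub_mul, smul_mul_assoc, mul_smul_comm, mul_assoc]
  match_scalars <;> field_simp
  ring

theorem qCommutator_inv_qCommutator_eq_alternatingW {q ρ : k} (hq : q ≠ 0) (hρ : ρ ≠ 0) (a₁ : k)
    (X Y : R) :
    qCommutator q⁻¹ X (qCommutator q X Y) =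
      ρ • (Y + (ρ⁻¹ * a₁ * (q - q⁻¹)) • X - alternatingW q ρ a₁ X Y) := by
  rw [qCommutator_inv_qCommutator hq, alternatingW]
  match_scalars <;> field_simp <;> ring

theorem commute_alternatingW {q ρ : k} (hq : q ≠ 0) (hρ : ρ ≠ 0) (a₁ : k) {X Y : R}
    (hDG : ⁅X, qCommutator q⁻¹ X (qCommutator q X Y)⁆ = ρ • ⁅X, Y⁆) :
    Commute X (alternatingW q ρ a₁ X Y) := by
  rw [qCommutator_inv_qCommutator_eq_alternatingW hq hρ a₁, LieAlgebra.lie_smul, lie_sub, lie_add,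
    LieAlgebra.lie_smul, lie_self, smul_zero, add_zero] at hDG
  rw [commute_iff_lie_eq]
  simpa using smul_right_injective R hρ hDG

theorem lie_correction {q ρ : k} (hq : q ≠ 0) (hρ : ρ ≠ 0) (a₁ : k) {X Y W : R}
    (hW : W = alternatingW q ρ a₁ X Y) :
    ⁅X, correction q ρ a₁ X Y⁆ =
      (q ^ 2 + q⁻¹ ^ 2 + 1) • (W * Y * X - X * Y * W) + (Y * X * W - W * X * Y) := by
  have hT := qCommutator_inv_qCommutator_eq_alternatingW hq hρ a₁ X Y
  rw [← hW] at hT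
  have hquartic := lie_quartic (hT.symm.trans (qCommutator_inv_qCommutator hq X Y))
  rw [correction, lie_sub, lie_add, lie_sub, LieAlgebra.lie_smul, hquartic]
  simp only [Ring.lie_def, pow_two X, pow_two Y, mul_add, add_mul, mul_sub, sub_mul,
    smul_mul_assoc, mul_smul_comm, mul_assoc]
  match_scalars <;> field_simp <;> ring

theorem alternatingG_eq_correction {q ρ : k} (hs : q ^ 2 + q⁻¹ ^ 2 ≠ 0) (hρ : ρ ≠ 0) (a₁ a₂ : k)
    {X Y W : R} (hW : W = alternatingW q ρ a₁ X Y) :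
    alternatingG q ρ a₁ a₂ X Y =
      (q ^ 2 + q⁻¹ ^ 2)⁻¹ • ((q ^ 3 + q) • (Y * W) - (q⁻¹ ^ 3 + q⁻¹) • (W * Y)
        + (q - q⁻¹) • correction q ρ a₁ X Y) + a₂ • (1 : R) := by
  have hq := ne_zero_of_sq_add_inv_sq_ne_zero hs
  simp only [hW, alternatingG, alternatingW, correction, quartic, qCommutator, pow_two X, pow_two Y,
    mul_add, add_mul, mul_sub, sub_mul, smul_mul_assoc, mul_smul_comm, mul_assoc]
  match_scalars <;> field_simp <;> ring

theorem lie_alternatingG {q ρ : k} (hs : q ^ 2 + q⁻¹ ^ 2 ≠ 0) (hρ : ρ ≠ 0) (a₁ a₂ : k) {X Y W : R}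
    (hW : W = alternatingW q ρ a₁ X Y) (hXW : Commute X W) :
    ⁅X, alternatingG q ρ a₁ a₂ X Y⁆ = -⁅qCommutator q Y X, W⁆ := by
  have hq := ne_zero_of_sq_add_inv_sq_ne_zero hs
  have hYW : ⁅X, Y * W⁆ = X * Y * W - Y * X * W := by
    rw [Ring.lie_def, mul_assoc Y W X, ← hXW.eq, ← mul_assoc, ← mul_assoc]
  have hWY : ⁅X, W * Y⁆ = W * X * Y - W * Y * X := by
    rw [Ring.lie_def, ← mul_assoc, hXW.eq]
  have hconst : ⁅X, a₂ • (1 : R)⁆ = 0 := ((Commute.one_right X).smul_right a₂).lie_eq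
  rw [alternatingG_eq_correction hs hρ a₁ a₂ hW, lie_add, hconst, add_zero, LieAlgebra.lie_smul,
    inv_smul_eq_iff₀ hs]
  simp only [lie_add, lie_sub, LieAlgebra.lie_smul, hYW, hWY, lie_correction hq hρ a₁ hW]
  simp only [Ring.lie_def, qCommutator, mul_sub, sub_mul, smul_mul_assoc, mul_smul_comm, mul_assoc]
  match_scalars <;> field_simp <;> ring

end QOnsager

open QOnsager in
theorem stmt_13_general {k R : Type*} [Field k] [Ring R] [Algebra k R] {q ρ : k}
    (hs : q ^ 2 + q⁻¹ ^ 2 ≠ 0) (hρ : ρ ≠ 0) (a₁ a₂ : k) {X Y : R}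
    (hDG : ⁅X, qCommutator q⁻¹ X (qCommutator q X Y)⁆ = ρ • ⁅X, Y⁆) :
    ⁅X, alternatingG q ρ a₁ a₂ X Y⁆
      + ⁅qCommutator q Y X + a₁ • (1 : R), alternatingW q ρ a₁ X Y⁆ = 0 := by
  have hXW := commute_alternatingW (ne_zero_of_sq_add_inv_sq_ne_zero hs) hρ a₁ hDG
  have hconst : ⁅a₁ • (1 : R), alternatingW q ρ a₁ X Y⁆ = 0 :=
    ((Commute.one_left _).smul_left a₁).lie_eq
  rw [lie_alternatingG hs hρ a₁ a₂ rfl hXW, add_lie, hconst, add_zero, neg_add_cancel]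

theorem stmt_13
    {R : Type*} [Ring R] [Algebra ℂ R]
    (q ρ a₁ : ℂ) (hq : q ≠ 0) (hq8 : q ^ 8 ≠ 1) (hρ : ρ ≠ 0)
    (A As : R)
    (hDG1 : lieComm A (qcomm q⁻¹ A (qcomm q A As)) = ρ • lieComm A As)
    (hDG2 : lieComm As (qcomm q⁻¹ As (qcomm q As A)) = ρ • lieComm As A)
    (G1 Gt1 Wm1 W2 : R)
    (hG1 : G1 = qcomm q As A + a₁ • (1 : R))
    (hGt1 : Gt1 = qcomm q A As + a₁ • (1 : R))
    (hWm1 : Wm1 = ρ⁻¹ • ((q ^ 2 + q⁻¹ ^ 2) • (A * As * A) - A ^ 2 * As - As * A ^ 2)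
        + As + (ρ⁻¹ * a₁ * (q - q⁻¹)) • A)
    (hW2 : W2 = ρ⁻¹ • ((q ^ 2 + q⁻¹ ^ 2) • (As * A * As) - As ^ 2 * A - A * As ^ 2)
        + A + (ρ⁻¹ * a₁ * (q - q⁻¹)) • As)
    (a₂ : ℂ) (G2 Gt2 : R)
    (hG2 : G2 = (ρ * (q ^ 2 + q⁻¹ ^ 2))⁻¹ •
        ((q⁻¹ ^ 3 + q⁻¹) • (A ^ 2 * As ^ 2) - (q ^ 3 + q) • (As ^ 2 * A ^ 2)
          + (q⁻¹ ^ 3 - q ^ 3) • (A * As ^ 2 * A + As * A ^ 2 * As)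
          - (q⁻¹ ^ 5 + q⁻¹ ^ 3 + 2 * q⁻¹) • (A * As * A * As)
          + (q ^ 5 + q ^ 3 + 2 * q) • (As * A * As * A)
          + (ρ * (q - q⁻¹)) • (A ^ 2 + As ^ 2)
          + (a₁ * (q ^ 2 + q⁻¹ ^ 2) * (q - q⁻¹)) • qcomm q As A) + a₂ • (1 : R))
    (hGt2 : Gt2 = (ρ * (q ^ 2 + q⁻¹ ^ 2))⁻¹ •
        ((q⁻¹ ^ 3 + q⁻¹) • (As ^ 2 * A ^ 2) - (q ^ 3 + q) • (A ^ 2 * As ^ 2)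
          + (q⁻¹ ^ 3 - q ^ 3) • (As * A ^ 2 * As + A * As ^ 2 * A)
          - (q⁻¹ ^ 5 + q⁻¹ ^ 3 + 2 * q⁻¹) • (As * A * As * A)
          + (q ^ 5 + q ^ 3 + 2 * q) • (A * As * A * As)
          + (ρ * (q - q⁻¹)) • (As ^ 2 + A ^ 2)
          + (a₁ * (q ^ 2 + q⁻¹ ^ 2) * (q - q⁻¹)) • qcomm q A As) + a₂ • (1 : R))
    : lieComm As Gt2 + lieComm Gt1 W2 = 0 := by
  subst hGt1 hW2 hGt2
  exact stmt_13_general (QOnsager.sq_add_inv_sq_ne_zero hq hq8) hρ a₁ a₂ hDG2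
end
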